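/- arXiv:1710.09502 — 3 statements merged into one kernel-verified Lean document; each statement's English description precedes it below -/
import Mathlib

section
/- Let variables x be partitioned into d groups and let M(x) ∈ Mat_m(F[x]) be a matrix whose entries are homogeneous set-multilinear polynomials of degree d with respect to this partition, over a field F of characteristic zero. If the symbolic rank of M(x) is at most r, then M(x) can be written as a sum of at most r·2^d rank-one matrices f_i(x) ⊗ g_i(x), where for each i there is a partition S_i ⊔ ([d]∖S_i) of the groups such that f_i is homogeneous set-multilinear with respect to the groups in S_i and g_i with respect to the groups in [d]∖S_i. -/
/-!
Over the fraction field, `M = P * Q` with inner dimension the rank of `M`; clearing denominators,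
`D • M = P * Q` for a nonzero polynomial `D`. As the field is infinite, `D` does not vanish at some
point `a`. Translate by `a`: then `D` is invertible modulo every power of the ideal of the
variables, and the top-degree part of `M` does not change, so `M` is the degree-`d` part of a
product `P' * Q'` of polynomial matrices with the same inner dimension. In the set-multilinear part
of each product `P' p i * Q' i q`, every monomial splits its groups between the two factors, which
gives, for each `i`, one rank-one matrix for each of the `2 ^ d` sets of groups.
-/

open MvPolynomial
open Finset.HasAntidiagonal (antidiagonal mem_antidiagonal)

section RankFactorization

variable {l m : Type*} [Fintype m]

theorem exists_eq_mul_of_rank {K : Type*} [Field K] (A : Matrix l m K) :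
    ∃ (P : Matrix l (Fin A.rank) K) (Q : Matrix (Fin A.rank) m K), A = P * Q := by
  classical
  let b : Module.Basis (Fin A.rank) K (LinearMap.range A.mulVecLin) := Module.finBasis K _
  let column (j : m) : LinearMap.range A.mulVecLin := ⟨A.col j, Pi.single j 1, by simp⟩
  refine ⟨.of fun i k => (b k : l → K) i, .of fun k j => b.repr (column j) k, ?_⟩
  ext i j
  have expansion : ∑ k, b.repr (column j) k • (b k : l → K) = A.col j := by
    simpa only [Submodule.coe_sum, Submodule.coe_smul] using
      congrArg Subtype.val (b.sum_repr (column j))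
  simpa [Matrix.mul_apply, mul_comm] using (congrFun expansion i).symm

variable {R K : Type*} [CommRing R] [Field K] [Algebra R K] [IsFractionRing R K]

theorem exists_map_algebraMap_eq_smul {n : Type*} [Finite l] [Finite n] (A : Matrix l n K) :
    ∃ D ∈ nonZeroDivisors R, ∃ B : Matrix l n R, B.map (algebraMap R K) = D • A := by
  obtain ⟨D, hD⟩ := IsLocalization.exist_integer_multiples_of_finite (nonZeroDivisors R)
    fun x : l × n => A x.1 x.2
  choose B hB using hD
  exact ⟨D, D.2, .of fun i j => B (i, j), by ext i j; exact hB (i, j)⟩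

variable (K) in
theorem exists_smul_eq_mul_of_rank_map [Finite l] (A : Matrix l m R) :
    ∃ D ∈ nonZeroDivisors R, ∃ (P : Matrix l (Fin (A.map (algebraMap R K)).rank) R)
      (Q : Matrix (Fin (A.map (algebraMap R K)).rank) m R), D • A = P * Q := by
  obtain ⟨P, Q, hPQ⟩ := exists_eq_mul_of_rank (A.map (algebraMap R K))
  obtain ⟨D, hD, P', hP'⟩ := exists_map_algebraMap_eq_smul (R := R) P
  obtain ⟨E, hE, Q', hQ'⟩ := exists_map_algebraMap_eq_smul (R := R) Q
  refine ⟨D * E, mul_mem hD hE, P', Q', Matrix.map_injective (IsFractionRing.injective R K) ?_⟩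
  calc ((D * E) • A).map (algebraMap R K)
      = (D * E) • A.map (algebraMap R K) := by ext; simp [Algebra.smul_def]
    _ = (D • P) * (E • Q) := by
        rw [Matrix.smul_mul, Matrix.mul_smul, ← hPQ, mul_smul]
    _ = (P' * Q').map (algebraMap R K) := by rw [← hP', ← hQ', Matrix.map_mul]

end RankFactorization

section Translate

variable {σ R : Type*} [CommSemiring R]

/-- The substitution `p(x) ↦ p(x + a)`. -/
noncomputable def translateHom (a : σ → R) :
    MvPolynomial σ R →ₐ[R] MvPolynomial σ R :=
  aeval fun s => X s + C (a s)

theorem constantCoeff_translateHom (a : σ → R) (p : MvPolynomial σ R) :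
    constantCoeff (translateHom a p) = eval a p := by
  have : constantCoeff.comp (translateHom a).toRingHom = eval a := by ext <;> simp [translateHom]
  exact congrArg (· p) this

theorem coeff_translateHom_monomial (a : σ → R) (u : σ →₀ ℕ) (r : R)
    {e : σ →₀ ℕ} (he : u.degree ≤ e.degree) :
    coeff e (translateHom a (monomial u r)) = coeff e (monomial u r) := by
  classical
  obtain ⟨t, rfl⟩ := Multiset.toFinsupp.surjective u
  induction t using Multiset.induction generalizing e with
  | empty => simp [translateHom, ← C_apply]
  | cons s t ih =>
    simp only [← Multiset.singleton_add, map_add, Multiset.toFinsupp_singleton,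
      Finsupp.degree_single, monomial_single_add, pow_one, map_mul] at he ⊢
    have shift_term : coeff e (translateHom a (monomial t.toFinsupp r)) = 0 := by
      rw [ih (by omega), coeff_monomial, if_neg]
      rintro rfl
      omega
    have translateHom_X : translateHom a (X s) = X s + C (a s) := by simp [translateHom]
    rw [translateHom_X, add_mul, coeff_add, coeff_C_mul, shift_term, mul_zero, add_zero,
      coeff_X_mul', coeff_X_mul']
    split_ifs with hs
    · have degree_e : (e - Finsupp.single s 1).degree + 1 = e.degree := by
        conv_rhs => rw [← Finsupp.sub_add_single_one_cancel (Finsupp.mem_support_iff.1 hs)]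
        simp
      exact ih (by omega)
    · rfl

theorem coeff_translateHom (a : σ → R) {p : MvPolynomial σ R} {e : σ →₀ ℕ}
    (he : p.totalDegree ≤ e.degree) : coeff e (translateHom a p) = coeff e p := by
  conv_lhs => rw [p.as_sum, map_sum, coeff_sum]
  conv_rhs => rw [p.as_sum, coeff_sum]
  refine Finset.sum_congr rfl fun u hu => coeff_translateHom_monomial a u _ ?_
  exact (le_totalDegree hu).trans he

theorem homogeneousComponent_translateHom (a : σ → R) {p : MvPolynomial σ R}
    {N : ℕ} (hp : p.IsHomogeneous N) : homogeneousComponent N (translateHom a p) = p := by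
  ext e
  rw [coeff_homogeneousComponent]
  split_ifs with he
  · exact coeff_translateHom a (he ▸ hp.totalDegree_le)
  · exact (hp.coeff_eq_zero he).symm

end Translate

section Truncation

variable {σ R : Type*} [CommRing R]

theorem homogeneousComponent_eq_of_sub_mem_pow_idealOfVars {p q : MvPolynomial σ R} {N : ℕ}
    (h : p - q ∈ idealOfVars σ R ^ (N + 1)) :
    homogeneousComponent N p = homogeneousComponent N q := by
  rw [← sub_eq_zero, ← map_sub]
  refine homogeneousComponent_eq_zero' N _ fun e he => ?_
  have := (mem_pow_idealOfVars_iff (N + 1) _).1 h e he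
  omega

theorem exists_mul_sub_one_mem_pow_idealOfVars {D : MvPolynomial σ R}
    (hD : IsUnit (constantCoeff D)) (N : ℕ) : ∃ U, U * D - 1 ∈ idealOfVars σ R ^ N := by
  obtain ⟨c, hc⟩ := hD.exists_left_inv
  have one_sub_mem : 1 - C c * D ∈ idealOfVars σ R := by
    rw [← pow_one (idealOfVars σ R), mem_pow_idealOfVars_iff']
    intro e he
    obtain rfl : e = 0 := (Finsupp.degree_eq_zero_iff e).1 (by omega)
    simp [← constantCoeff_eq, hc]
  have coprime : IsCoprime (Ideal.span {D}) (idealOfVars σ R) :=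
    Ideal.isCoprime_iff_exists.2 ⟨C c * D, Ideal.mem_span_singleton'.2 ⟨C c, rfl⟩, _, one_sub_mem,
      by ring⟩
  obtain ⟨y, hy, z, hz, hyz⟩ := Ideal.isCoprime_iff_exists.1 (coprime.pow_right (n := N))
  obtain ⟨U, rfl⟩ := Ideal.mem_span_singleton'.1 hy
  exact ⟨U, by simpa [← hyz] using hz⟩

end Truncation

theorem exists_homogeneousComponent_mul_eq {F σ l m : Type*} (K : Type*) [Field F] [Infinite F]
    [Finite l] [Fintype m] [Field K] [Algebra (MvPolynomial σ F) K]
    [IsFractionRing (MvPolynomial σ F) K]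
    {M : Matrix l m (MvPolynomial σ F)} {N : ℕ} (hM : ∀ p q, (M p q).IsHomogeneous N) :
    ∃ (P : Matrix l (Fin (M.map (algebraMap _ K)).rank) (MvPolynomial σ F))
      (Q : Matrix (Fin (M.map (algebraMap _ K)).rank) m (MvPolynomial σ F)),
      (P * Q).map (homogeneousComponent N) = M := by
  obtain ⟨D, hD, P, Q, hPQ⟩ := exists_smul_eq_mul_of_rank_map K M
  obtain ⟨a, ha⟩ : ∃ a, eval a D ≠ 0 := by
    by_contra! h
    exact nonZeroDivisors.ne_zero hD (MvPolynomial.funext fun a => by simp [h a])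
  obtain ⟨U, hU⟩ := exists_mul_sub_one_mem_pow_idealOfVars (D := translateHom a D)
    (by rwa [constantCoeff_translateHom, isUnit_iff_ne_zero]) (N + 1)
  refine ⟨P.map (translateHom a), U • Q.map (translateHom a), ?_⟩
  have product : P.map (translateHom a) * U • Q.map (translateHom a) =
      (U * translateHom a D) • M.map (translateHom a) := by
    rw [Matrix.mul_smul, ← Matrix.map_mul, ← hPQ, mul_smul]
    ext1 p q
    simp
  ext1 p q
  rw [product]
  refine (homogeneousComponent_eq_of_sub_mem_pow_idealOfVars ?_).trans
    (homogeneousComponent_translateHom a (hM p q))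
  have := Ideal.mul_mem_right (translateHom a (M p q)) _ hU
  simpa only [Matrix.smul_apply, Matrix.map_apply, smul_eq_mul, sub_mul, one_mul] using this

section SetMultilinear

variable {σ ι R : Type*} [CommSemiring R]

theorem weightedHomogeneousComponent_mul {A : Type*} [AddCommMonoid A]
    [Finset.HasAntidiagonal A] (w : σ → A) (n : A) (p q : MvPolynomial σ R) :
    weightedHomogeneousComponent w n (p * q) = ∑ x ∈ antidiagonal n,
      weightedHomogeneousComponent w x.1 p * weightedHomogeneousComponent w x.2 q := by
  classical
  ext e
  simp only [coeff_weightedHomogeneousComponent, coeff_sum, coeff_mul]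
  have sum_weights {x : (σ →₀ ℕ) × (σ →₀ ℕ)} (hx : x ∈ antidiagonal e) :
      (∑ y ∈ antidiagonal n, (if Finsupp.weight w x.1 = y.1 then coeff x.1 p else 0) *
        (if Finsupp.weight w x.2 = y.2 then coeff x.2 q else 0)) =
      if Finsupp.weight w e = n then coeff x.1 p * coeff x.2 q else 0 := by
    simp only [ite_zero_mul_ite_zero, ← Prod.mk.injEq, Prod.mk.eta, Finset.sum_ite_eq,
      mem_antidiagonal, ← map_add, mem_antidiagonal.1 hx]
  rw [Finset.sum_comm, Finset.sum_congr rfl fun x hx => sum_weights hx]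
  split_ifs <;> simp

/-- The degree in each group of variables of a set-multilinear monomial in the groups of `T`. -/
noncomputable def multilinearDegree (T : Finset ι) : ι →₀ ℕ :=
  Finsupp.indicator T fun _ _ => 1

theorem multilinearDegree_apply [DecidableEq ι] (T : Finset ι) (k : ι) :
    multilinearDegree T k = if k ∈ T then 1 else 0 := by
  simp [multilinearDegree, Finsupp.indicator_apply]

theorem support_multilinearDegree (T : Finset ι) : (multilinearDegree T).support = T := by
  classical
  ext k
  simp [multilinearDegree_apply]

theorem degree_multilinearDegree (T : Finset ι) : (multilinearDegree T).degree = T.card := by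
  classical
  simp [Finsupp.degree_apply, support_multilinearDegree, multilinearDegree_apply]

theorem add_eq_multilinearDegree_iff [DecidableEq ι] {T : Finset ι} {u v : ι →₀ ℕ} :
    u + v = multilinearDegree T ↔ u.support ⊆ T ∧ u = multilinearDegree u.support ∧
      v = multilinearDegree (T \ u.support) := by
  simp only [DFunLike.ext_iff, Finsupp.add_apply, multilinearDegree_apply, Finset.subset_iff,
    Finset.mem_sdiff, Finsupp.mem_support_iff, ← forall_and]
  refine forall_congr' fun k => ?_
  split_ifs <;> grind

theorem sum_antidiagonal_multilinearDegree [DecidableEq ι] {A : Type*} [AddCommMonoid A]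
    (T : Finset ι) (f : (ι →₀ ℕ) × (ι →₀ ℕ) → A) :
    ∑ x ∈ antidiagonal (multilinearDegree T), f x =
      ∑ S ∈ T.powerset, f (multilinearDegree S, multilinearDegree (T \ S)) := by
  refine Finset.sum_nbij' (fun x => x.1.support)
    (fun S => (multilinearDegree S, multilinearDegree (T \ S))) ?_ ?_ ?_ ?_ ?_
  · intro x hx
    exact Finset.mem_powerset.2 (add_eq_multilinearDegree_iff.1 (mem_antidiagonal.1 hx)).1
  · intro S hS
    rw [mem_antidiagonal, add_eq_multilinearDegree_iff]
    simpa [support_multilinearDegree] using hS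
  · intro x hx
    obtain ⟨-, hu, hv⟩ := add_eq_multilinearDegree_iff.1 (mem_antidiagonal.1 hx)
    exact Prod.ext hu.symm hv.symm
  · exact fun S _ => support_multilinearDegree S
  · intro x hx
    obtain ⟨-, hu, hv⟩ := add_eq_multilinearDegree_iff.1 (mem_antidiagonal.1 hx)
    exact congrArg f (Prod.ext hu hv)

/-- The weights on the variables for which the weight of a monomial is its degree in each of the
groups of variables, where `c s` is the group of the variable `s`. -/
noncomputable def groupWeight (c : σ → ι) (s : σ) : ι →₀ ℕ :=
  Finsupp.single (c s) 1

/-- Set-multilinearity of `p` in the groups of `T`: every monomial of `p` has exactly one variable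
from each group in `T` and no others. It is encoded as homogeneity for the grading by the degrees
in the groups. -/
def IsSetMultilinear (c : σ → ι) (T : Finset ι) (p : MvPolynomial σ R) : Prop :=
  IsWeightedHomogeneous (groupWeight c) p (multilinearDegree T)

/-- The part of a polynomial that is set-multilinear in the groups of `T`. -/
noncomputable def setMultilinearComponent (c : σ → ι) (T : Finset ι) :
    MvPolynomial σ R →ₗ[R] MvPolynomial σ R :=
  weightedHomogeneousComponent (groupWeight c) (multilinearDegree T)

variable (c : σ → ι) (T : Finset ι) (p q : MvPolynomial σ R)

theorem isSetMultilinear_setMultilinearComponent :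
    IsSetMultilinear c T (setMultilinearComponent c T p) :=
  weightedHomogeneousComponent_isWeightedHomogeneous _ _

theorem setMultilinearComponent_mul [DecidableEq ι] :
    setMultilinearComponent c T (p * q) = ∑ S ∈ T.powerset,
      setMultilinearComponent c S p * setMultilinearComponent c (T \ S) q :=
  (weightedHomogeneousComponent_mul _ _ p q).trans (sum_antidiagonal_multilinearDegree T _)

theorem weight_groupWeight (e : σ →₀ ℕ) :
    Finsupp.weight (groupWeight c) e = e.mapDomain c := by
  simp [groupWeight, Finsupp.weight_apply, Finsupp.mapDomain]

variable {c T p}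

theorem degree_eq_card_of_weight_eq {e : σ →₀ ℕ}
    (he : Finsupp.weight (groupWeight c) e = multilinearDegree T) :
    e.degree = T.card := by
  rw [← degree_multilinearDegree, ← he, weight_groupWeight, Finsupp.degree_mapDomain]

theorem IsSetMultilinear.isHomogeneous (hp : IsSetMultilinear c T p) :
    p.IsHomogeneous T.card := by
  intro e he
  rw [Pi.one_def, ← Finsupp.degree_eq_weight_one]
  exact degree_eq_card_of_weight_eq (hp he)

theorem IsSetMultilinear.setMultilinearComponent_eq (hp : IsSetMultilinear c T p) :
    setMultilinearComponent c T p = p :=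
  weightedHomogeneousComponent_eq_self hp

variable (c T p) in
theorem setMultilinearComponent_homogeneousComponent :
    setMultilinearComponent c T (homogeneousComponent T.card p) =
      setMultilinearComponent c T p := by
  classical
  ext e
  simp only [setMultilinearComponent, coeff_weightedHomogeneousComponent,
    coeff_homogeneousComponent]
  split_ifs with he hdeg
  · rfl
  · exact absurd (degree_eq_card_of_weight_eq he) hdeg
  · rfl

theorem mapDomain_fst_apply {κ A : Type*} [Fintype κ] [AddCommMonoid A] (e : ι × κ →₀ A)
    (k : ι) :
    e.mapDomain Prod.fst k = ∑ j, e (k, j) := by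
  classical
  induction e using Finsupp.induction_linear with
  | zero => simp
  | add u v hu hv => simp [Finsupp.mapDomain_add, hu, hv, Finset.sum_add_distrib]
  | single x a =>
    obtain ⟨i, j⟩ := x
    by_cases hik : i = k <;> simp [Finsupp.mapDomain_single, Finsupp.single_apply, hik]

theorem isSetMultilinear_fst_iff {κ : Type*} [Fintype κ] {p : MvPolynomial (ι × κ) R} :
    IsSetMultilinear Prod.fst T p ↔ ∀ e ∈ p.support,
      (∀ k ∈ T, ∑ j, e (k, j) = 1) ∧ ∀ k ∉ T, ∀ j, e (k, j) = 0 := by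
  classical
  simp only [IsSetMultilinear, IsWeightedHomogeneous, weight_groupWeight, DFunLike.ext_iff,
    mapDomain_fst_apply, multilinearDegree_apply, mem_support_iff]
  refine forall₂_congr fun e _ => ⟨fun h => ⟨?_, ?_⟩, fun h k => ?_⟩
  · exact fun k hk => by simp [h, hk]
  · exact fun k hk j => Finset.sum_eq_zero_iff.1 ((h k).trans (if_neg hk)) j (Finset.mem_univ j)
  · split_ifs with hk
    · exact h.1 k hk
    · exact Finset.sum_eq_zero fun j _ => h.2 k hk j

end SetMultilinear

theorem stmt10_general {F σ ι l m K : Type*} [Field F] [Infinite F] [Fintype ι] [DecidableEq ι]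
    [Finite l] [Fintype m] [Field K] [Algebra (MvPolynomial σ F) K]
    [IsFractionRing (MvPolynomial σ F) K] (c : σ → ι) (r : ℕ) (M : Matrix l m (MvPolynomial σ F))
    (hM : ∀ p q, IsSetMultilinear c Finset.univ (M p q))
    (hr : (M.map (algebraMap (MvPolynomial σ F) K)).rank ≤ r) :
    ∃ R, R ≤ r * 2 ^ Fintype.card ι ∧
      ∃ (f : Fin R → l → MvPolynomial σ F) (g : Fin R → m → MvPolynomial σ F)
        (S : Fin R → Finset ι),
        (∀ i p, IsSetMultilinear c (S i) (f i p)) ∧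
        (∀ i q, IsSetMultilinear c (S i)ᶜ (g i q)) ∧
        M = ∑ i, Matrix.vecMulVec (f i) (g i) := by
  obtain ⟨P, Q, hPQ⟩ := exists_homogeneousComponent_mul_eq K fun p q => (hM p q).isHomogeneous
  generalize (M.map (algebraMap (MvPolynomial σ F) K)).rank = ρ at hr P Q hPQ
  let E : Fin (ρ * 2 ^ Fintype.card ι) ≃ Fin ρ × Finset ι :=
    (Fintype.equivFinOfCardEq (by simp)).symm
  refine ⟨_, Nat.mul_le_mul_right _ hr,
    fun i p => setMultilinearComponent c (E i).2 (P p (E i).1),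
    fun i q => setMultilinearComponent c (E i).2ᶜ (Q (E i).1 q), fun i => (E i).2,
    fun _ _ => isSetMultilinear_setMultilinearComponent ..,
    fun _ _ => isSetMultilinear_setMultilinearComponent .., ?_⟩
  ext1 p q
  calc M p q = setMultilinearComponent c Finset.univ (M p q) :=
        (hM p q).setMultilinearComponent_eq.symm
    _ = setMultilinearComponent c Finset.univ ((P * Q) p q) := by
        rw [← hPQ, Matrix.map_apply, setMultilinearComponent_homogeneousComponent]
    _ = ∑ x : Fin ρ × Finset ι,
          setMultilinearComponent c x.2 (P p x.1) * setMultilinearComponent c x.2ᶜ (Q x.1 q) := by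
        simp only [Matrix.mul_apply, map_sum, setMultilinearComponent_mul, Finset.powerset_univ,
          ← Finset.compl_eq_univ_sdiff, Fintype.sum_prod_type]
    _ = _ := by
        rw [← E.sum_comp, Matrix.sum_apply]; rfl

theorem stmt10 (F : Type*) [Field F] [CharZero F] (n m d r : ℕ)
    (M : Matrix (Fin m) (Fin m) (MvPolynomial (Fin d × Fin n) F))
    (hM : ∀ p q, ∀ e ∈ (M p q).support, ∀ k : Fin d, (∑ j : Fin n, e (k, j)) = 1)
    (hr : (M.map (algebraMap (MvPolynomial (Fin d × Fin n) F)
      (FractionRing (MvPolynomial (Fin d × Fin n) F)))).rank ≤ r) :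
    ∃ R, R ≤ r * 2 ^ d ∧
      ∃ f g : Fin R → Fin m → MvPolynomial (Fin d × Fin n) F,
      ∃ S : Fin R → Finset (Fin d),
        (∀ i p, ∀ e ∈ (f i p).support,
          (∀ k ∈ S i, (∑ j : Fin n, e (k, j)) = 1) ∧ ∀ k ∉ S i, ∀ j, e (k, j) = 0) ∧
        (∀ i p, ∀ e ∈ (g i p).support,
          (∀ k ∉ S i, (∑ j : Fin n, e (k, j)) = 1) ∧ ∀ k ∈ S i, ∀ j, e (k, j) = 0) ∧
        M = ∑ i, Matrix.of fun p q => f i p * g i q := by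
  simpa [isSetMultilinear_fst_iff, Matrix.vecMulVec] using stmt10_general Prod.fst r M
    (fun p q => isSetMultilinear_fst_iff.2 fun e he => ⟨fun k _ => hM p q e he k, by simp⟩) hr
end

section
/- Let F be an algebraically closed field of characteristic zero and let L : F[x_1,...,x_n]_{≤d} → Mat_m(F) be any linear map such that rank(L(ℓ(x)^d)) ≤ r for every affine form ℓ(x) = a_0 + ∑ a_i x_i. Then for every polynomial f(x) of degree at most d, rank(L(f)) ≤ r(d+1)·binomial(n + ⌊d/2⌋, n). -/
/-!
The matrix `M(a) = L((1 + ⟨a, x⟩) ^ d)` is polynomial of degree at most `d` in `a`, and since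
multinomial coefficients are nonzero in characteristic zero, every `L f` arises from it by applying
a linear functional `φ` to the entries. Choose `t` where the rank `s ≤ r` of `M(t)` is maximal, and
constant `P`, `Q` such that the `s × s` matrix `P M Q` is invertible at `t`. Its inverse, which
exists over the power series ring at `t`, factors the expansion of `M` at `t` as `U V` with inner
dimension `s`. Truncating in degree `d` and applying `φ` turns each of the `s` rank-one summands of
`U V` into a product that passes through the Hankel matrix `φ(x ^ (α + β))`. The entries of the
latter vanish for `|α| + |β| > d`, so its rank is at most the number of rows with `|α| ≤ ⌊d / 2⌋`
plus the number of columns with `|β| < ⌊(d + 1) / 2⌋`.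
-/

open MvPolynomial Matrix

namespace WaringRank

section MatrixRank

variable {K m n k : Type*} [Field K] [Fintype n]

lemma rank_add_le (A B : Matrix m n K) : (A + B).rank ≤ A.rank + B.rank := by
  unfold Matrix.rank
  rw [mulVecLin_add]
  exact (Submodule.finrank_mono (LinearMap.range_add_le _ _)).trans
    (Submodule.finrank_add_le_finrank_add_finrank _ _)

lemma rank_sum_le {ι : Type*} (s : Finset ι) (A : ι → Matrix m n K) :
    (∑ i ∈ s, A i).rank ≤ ∑ i ∈ s, (A i).rank := by
  classical
  induction s using Finset.induction_on with
  | empty => simp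
  | insert i s hi ih =>
    rw [Finset.sum_insert hi, Finset.sum_insert hi]
    exact (rank_add_le _ _).trans (Nat.add_le_add_left ih _)

lemma rank_le_card_add_card_of_eq_zero [Finite m] (A : Matrix m n K) (s : Finset m)
    (t : Finset n) (hA : ∀ i ∉ s, ∀ j ∉ t, A i j = 0) : A.rank ≤ s.card + t.card := by
  classical
  cases nonempty_fintype m
  let rowsIn : Matrix m n K := of fun i j => if i ∈ s then A i j else 0
  let rowsOut : Matrix m n K := of fun i j => if i ∈ s then 0 else A i j
  have split : A = rowsIn + rowsOut := by
    ext i j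
    by_cases hi : i ∈ s <;> simp [rowsIn, rowsOut, hi]
  have rank_rowsIn : rowsIn.rank ≤ s.card := by
    refine rank_le_card_of_support_subset _ s (Function.support_subset_iff'.2 fun i hi => ?_)
    ext j
    exact if_neg hi
  have rank_rowsOut : rowsOutᵀ.rank ≤ t.card := by
    refine rank_le_card_of_support_subset _ t (Function.support_subset_iff'.2 fun j hj => ?_)
    ext i
    by_cases hi : i ∈ s
    · exact if_pos hi
    · exact (if_neg hi).trans (hA i hi j hj)
  calc A.rank ≤ rowsIn.rank + rowsOut.rank := split ▸ rank_add_le rowsIn rowsOut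
    _ ≤ s.card + t.card := add_le_add rank_rowsIn (rank_transpose rowsOut ▸ rank_rowsOut)

variable [Fintype m]

lemma exists_mul_mul_eq_one (M : Matrix m n K) :
    ∃ (P : Matrix (Fin M.rank) m K) (Q : Matrix n (Fin M.rank) K), P * M * Q = 1 := by
  classical
  let e : M.mulVecLin.range ≃ₗ[K] (Fin M.rank → K) :=
    (Module.finBasis K M.mulVecLin.range).equivFun
  obtain ⟨retract, h_retract⟩ := M.mulVecLin.range.subtype.exists_leftInverse_of_injective
    (Submodule.ker_subtype _)
  obtain ⟨lift, h_lift⟩ := M.mulVecLin.rangeRestrict.exists_rightInverse_of_surjective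
    M.mulVecLin.range_rangeRestrict
  refine ⟨LinearMap.toMatrix' (e.toLinearMap ∘ₗ retract),
    LinearMap.toMatrix' (lift ∘ₗ e.symm.toLinearMap), toLin'.injective ?_⟩
  have mulVec_lift (x) : M *ᵥ lift x = x := congrArg Subtype.val (LinearMap.congr_fun h_lift x)
  have retract_coe (x : M.mulVecLin.range) : retract x = x := LinearMap.congr_fun h_retract x
  refine LinearMap.ext fun x => ?_
  simp only [toLin'_mul, toLin'_toMatrix', toLin'_one, LinearMap.comp_apply, toLin'_apply,
    LinearEquiv.coe_coe, mulVec_lift, retract_coe, LinearEquiv.apply_symm_apply, LinearMap.id_apply]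

variable [Fintype k] [DecidableEq k]

lemma det_smul_eq_mul_adjugate_mul {M : Matrix m n K} {P : Matrix k m K} {Q : Matrix n k K}
    (hdet : (P * M * Q).det ≠ 0) (hM : M.rank ≤ Fintype.card k) :
    (P * M * Q).det • M = M * Q * (P * M * Q).adjugate * (P * M) := by
  have rank_le : M.rank ≤ (M * Q).rank :=
    calc M.rank ≤ (P * M * Q).rank := by rwa [rank_of_det_ne_zero hdet]
      _ ≤ (M * Q).rank := Matrix.mul_assoc P M Q ▸ rank_mul_le_right _ _
  have range_le : (M * Q).mulVecLin.range ≤ M.mulVecLin.range := by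
    rw [mulVecLin_mul]
    exact LinearMap.range_comp_le_range _ _
  have range_eq := Submodule.eq_of_le_of_finrank_le range_le rank_le
  obtain ⟨X, hX⟩ : ∃ X : Matrix k n K, M * Q * X = M := by
    have (j : n) : ∃ x, (M * Q) *ᵥ x = M.col j := by
      simpa using range_eq.ge (M.range_mulVecLin ▸ Submodule.subset_span ⟨j, rfl⟩)
    choose x hx using this
    exact ⟨(of x)ᵀ, Matrix.ext fun i j => congrFun (hx j) i⟩
  symm
  calc M * Q * (P * M * Q).adjugate * (P * M)
      = M * Q * (P * M * Q).adjugate * (P * (M * Q * X)) := by rw [hX]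
    _ = M * Q * ((P * M * Q).adjugate * (P * M * Q)) * X := by simp only [Matrix.mul_assoc]
    _ = (P * M * Q).det • (M * Q * X) := by
      rw [adjugate_mul, Matrix.mul_smul, Matrix.mul_one, Matrix.smul_mul]
    _ = (P * M * Q).det • M := by rw [hX]

end MatrixRank

section Factorization

variable {F σ m n k : Type*} [Field F] [Infinite F] [Fintype m] [Fintype n] [Fintype k]
  [DecidableEq k] {N : Matrix m n (MvPolynomial σ F)} {P : Matrix k m (MvPolynomial σ F)}
  {Q : Matrix n k (MvPolynomial σ F)}

lemma det_smul_eq_mul_adjugate_mul_of_rank_eval_le (hdet : (P * N * Q).det ≠ 0)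
    (hN : ∀ a, (N.map (eval a)).rank ≤ Fintype.card k) :
    (P * N * Q).det • N = N * Q * (P * N * Q).adjugate * (P * N) := by
  set A := P * N * Q with hA
  -- The extra factor `A.det` makes the points where the determinant vanishes harmless.
  suffices h_eval : ∀ a, (A.det • (A.det • N)).map (eval a) =
      (A.det • (N * Q * A.adjugate * (P * N))).map (eval a) from
    smul_right_injective _ hdet <|
      Matrix.ext fun i j => MvPolynomial.funext fun a => congrFun₂ (h_eval a) i j
  intro a
  have map_smul (p : MvPolynomial σ F) (B : Matrix m n (MvPolynomial σ F)) :
      (p • B).map (eval a) = eval a p • B.map (eval a) := by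
    ext
    simp
  have map_adjugate : A.adjugate.map (eval a) = (A.map (eval a)).adjugate :=
    RingHom.map_adjugate _ _
  rw [map_smul, map_smul, map_smul, RingHom.map_det, RingHom.mapMatrix_apply]
  by_cases hA0 : (A.map (eval a)).det = 0
  · rw [hA0, zero_smul, zero_smul]
  congr 1
  simp only [Matrix.map_mul, map_adjugate]
  simp only [hA, Matrix.map_mul] at hA0 ⊢
  exact det_smul_eq_mul_adjugate_mul hA0 (hN a)

lemma exists_map_eq_mul {S : Type*} [CommRing S] [Nontrivial S] (φ : MvPolynomial σ F →+* S)
    (hdet : IsUnit (φ (P * N * Q).det)) (hN : ∀ a, (N.map (eval a)).rank ≤ Fintype.card k) :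
    ∃ (U : Matrix m k S) (V : Matrix k n S), N.map φ = U * V := by
  have hdet0 : (P * N * Q).det ≠ 0 := by
    intro h
    simp [h] at hdet
  obtain ⟨u, hu⟩ := hdet
  refine ⟨(N * Q).map φ, (↑u⁻¹ : S) • ((P * N * Q).adjugate * (P * N)).map φ, ?_⟩
  rw [Matrix.mul_smul, ← Matrix.map_mul, ← Matrix.mul_assoc,
    ← det_smul_eq_mul_adjugate_mul_of_rank_eval_le hdet0 hN]
  ext i j
  simp [← hu]

end Factorization

section Exponents

/-- The exponents of the monomials of total degree less than `k`. The bound is strict so that the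
set is empty for `k = 0`; degree at most `d` is `degreeLT σ (d + 1)`. -/
noncomputable def degreeLT (σ : Type*) [Finite σ] (k : ℕ) : Finset (σ →₀ ℕ) :=
  (Finsupp.finite_of_degree_lt k).toFinset

variable {σ : Type*}

@[simp]
lemma mem_degreeLT [Finite σ] {k : ℕ} {α : σ →₀ ℕ} : α ∈ degreeLT σ k ↔ α.degree < k := by
  simp [degreeLT]

lemma isLowerSet_degreeLT [Finite σ] (k : ℕ) : IsLowerSet (degreeLT σ k : Set (σ →₀ ℕ)) := by
  intro α β hβα hα
  simp only [Finset.mem_coe, mem_degreeLT] at hα ⊢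
  exact (Finsupp.degree_mono hβα).trans_lt hα

lemma degreeLT_mono [Finite σ] : Monotone (degreeLT σ) := by
  intro k l hkl α
  simp only [mem_degreeLT]
  exact fun hα => hα.trans_le hkl

lemma support_subset_degreeLT_iff [Finite σ] {R : Type*} [CommSemiring R]
    {p : MvPolynomial σ R} {d : ℕ} :
    p.support ⊆ degreeLT σ (d + 1) ↔ p.totalDegree ≤ d := by
  simp only [Finset.subset_iff, mem_degreeLT, Nat.lt_succ_iff]
  exact Finset.sup_le_iff.symm

lemma card_degreeLT_succ [Fintype σ] (k : ℕ) :
    (degreeLT σ (k + 1)).card = (Fintype.card σ + k).choose (Fintype.card σ) := by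
  classical
  have mem_antidiag (α : Option σ →₀ ℕ) :
      α ∈ (Finset.univ : Finset (Option σ)).finsuppAntidiag k ↔ α none + α.some.degree = k := by
    simp [Fintype.sum_option, Finsupp.degree_eq_sum]
  calc (degreeLT σ (k + 1)).card
      = ((Finset.univ : Finset (Option σ)).finsuppAntidiag k).card := by
        refine Finset.card_nbij' (fun α => α.optionElim (k - α.degree)) Finsupp.some ?_ ?_ ?_ ?_
        · intro α hα
          rw [Finset.mem_coe, mem_degreeLT] at hα
          rw [Finset.mem_coe, mem_antidiag, Finsupp.optionElim_apply_none, Finsupp.some_optionElim]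
          lia
        · intro α hα
          rw [Finset.mem_coe, mem_antidiag] at hα
          rw [Finset.mem_coe, mem_degreeLT]
          lia
        · exact fun α _ => Finsupp.some_optionElim _ α
        · intro α hα
          rw [Finset.mem_coe, mem_antidiag] at hα
          simp only [← hα, Nat.add_sub_cancel, Finsupp.optionElim_some]
    _ = (Fintype.card σ + k).choose (Fintype.card σ) := by
        rw [Finset.card_finsuppAntidiag_nat_eq_choose, Finset.card_univ, Fintype.card_option,
          Nat.add_right_comm, Nat.add_sub_cancel, Nat.choose_symm_add]

end Exponents

section Hankel

open MvPowerSeries (truncFinset truncFinset_apply coeff_truncFinset_of_mem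
  coeff_truncFinset_eq_zero coeff_truncFinset_mul_truncFinset_eq_coeff_mul
  truncFinset_monomial_eq_zero)

variable {R σ : Type*} [CommSemiring R] {s : Finset (σ →₀ ℕ)}

lemma truncFinset_coe_truncFinset_mul_truncFinset (hs : IsLowerSet (s : Set (σ →₀ ℕ)))
    (u v : MvPowerSeries σ R) :
    truncFinset R s ↑(truncFinset R s u * truncFinset R s v) = truncFinset R s (u * v) := by
  ext γ
  by_cases hγ : γ ∈ s
  · rw [coeff_truncFinset_of_mem _ hγ, coeff_truncFinset_of_mem _ hγ, coeff_coe,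
      coeff_truncFinset_mul_truncFinset_eq_coeff_mul hs _ _ hγ]
  · rw [coeff_truncFinset_eq_zero _ hγ, coeff_truncFinset_eq_zero _ hγ]

/-- The Hankel (catalecticant) matrix `φ (x ^ (α + β))` of a functional `φ` on polynomials with
exponents in `s`. Truncation to `s` makes the entry zero when `α + β ∉ s`. -/
noncomputable def hankel (φ : MvPolynomial σ R →ₗ[R] R) (s : Finset (σ →₀ ℕ)) : Matrix s s R :=
  of fun α β => φ (truncFinset R s ↑(monomial (α + β : σ →₀ ℕ) (1 : R)))

lemma map_truncFinset_mul (hs : IsLowerSet (s : Set (σ →₀ ℕ))) (φ : MvPolynomial σ R →ₗ[R] R)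
    (u v : MvPowerSeries σ R) :
    φ (truncFinset R s (u * v)) =
      ∑ α : s, ∑ β : s, MvPowerSeries.coeff α.1 u * hankel φ s α β * MvPowerSeries.coeff β.1 v := by
  have map_monomial_mul (α β : σ →₀ ℕ) (a b : R) :
      φ (truncFinset R s ↑(monomial α a * monomial β b)) =
        a * φ (truncFinset R s ↑(monomial (α + β) (1 : R))) * b := by
    have : (↑(monomial α a * monomial β b) : MvPowerSeries σ R) =
        (a * b) • ↑(monomial (α + β) (1 : R)) := by
      simp [monomial_mul, coe_monomial, ← map_smul]
    rw [this, map_smul, map_smul, smul_eq_mul, mul_right_comm]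
  rw [← truncFinset_coe_truncFinset_mul_truncFinset hs, truncFinset_apply u,
    truncFinset_apply v, Finset.sum_mul_sum]
  simp only [← coeToMvPowerSeries.ringHom_apply, map_sum] at map_monomial_mul ⊢
  simp only [map_monomial_mul, ← s.sum_coe_sort]
  rfl

variable {F m n k : Type*} [Field F] [Fintype n] [Fintype k]

lemma rank_map_truncFinset_mul_le (hs : IsLowerSet (s : Set (σ →₀ ℕ)))
    (φ : MvPolynomial σ F →ₗ[F] F) (U : Matrix m k (MvPowerSeries σ F))
    (V : Matrix k n (MvPowerSeries σ F)) :
    ((U * V).map fun p => φ (truncFinset F s p)).rank ≤ Fintype.card k * (hankel φ s).rank := by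
  let rows (l : k) : Matrix m s F := of fun i α => MvPowerSeries.coeff α.1 (U i l)
  let cols (l : k) : Matrix s n F := of fun β j => MvPowerSeries.coeff β.1 (V l j)
  have h_sum : ((U * V).map fun p => φ (truncFinset F s p)) =
      ∑ l, rows l * hankel φ s * cols l := by
    ext i j
    simp only [map_apply, Matrix.mul_apply, map_sum, map_truncFinset_mul hs, Matrix.sum_apply,
      Finset.sum_mul, rows, cols, of_apply]
    exact Finset.sum_congr rfl fun l _ => Finset.sum_comm
  calc ((U * V).map fun p => φ (truncFinset F s p)).rank
      ≤ ∑ l, (rows l * hankel φ s * cols l).rank := h_sum ▸ rank_sum_le _ _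
    _ ≤ ∑ _l : k, (hankel φ s).rank := Finset.sum_le_sum fun l _ =>
        (rank_mul_le_left _ _).trans (rank_mul_le_right _ _)
    _ = Fintype.card k * (hankel φ s).rank := by
        rw [Finset.sum_const, Finset.card_univ, smul_eq_mul]

lemma rank_hankel_degreeLT_le [Finite σ] (φ : MvPolynomial σ F →ₗ[F] F) (d : ℕ) :
    (hankel φ (degreeLT σ (d + 1))).rank ≤
      (degreeLT σ (d / 2 + 1)).card + (degreeLT σ ((d + 1) / 2)).card := by
  classical
  have card_le (l : ℕ) : (Finset.univ.filter fun α : degreeLT σ (d + 1) =>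
      α.1 ∈ degreeLT σ l).card ≤ (degreeLT σ l).card :=
    Finset.card_le_card_of_injOn Subtype.val (by simp [Set.MapsTo]) Subtype.val_injective.injOn
  refine (rank_le_card_add_card_of_eq_zero _ _ _ fun α hα β hβ => ?_).trans
    (add_le_add (card_le _) (card_le _))
  have hαβ : α.1 + β.1 ∉ degreeLT σ (d + 1) := by
    simp only [Finset.mem_filter_univ, mem_degreeLT, map_add] at hα hβ ⊢
    lia
  rw [hankel, of_apply, coe_monomial, truncFinset_monomial_eq_zero _ hαβ, map_zero]

end Hankel

section Translation

variable {R σ : Type*}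

lemma totalDegree_aeval_le {τ : Type*} [CommSemiring R] {g : σ → MvPolynomial τ R} {e : ℕ}
    (hg : ∀ i, (g i).totalDegree ≤ e) (p : MvPolynomial σ R) :
    (aeval g p).totalDegree ≤ e * p.totalDegree := by
  rw [aeval_def, eval₂_eq]
  refine totalDegree_finsetSum_le fun γ hγ => ?_
  calc (C (coeff γ p) * ∏ i ∈ γ.support, g i ^ γ i).totalDegree
      ≤ (∏ i ∈ γ.support, g i ^ γ i).totalDegree := by
        simpa using totalDegree_mul (C (coeff γ p)) (∏ i ∈ γ.support, g i ^ γ i)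
    _ ≤ ∑ i ∈ γ.support, (g i ^ γ i).totalDegree := totalDegree_finsetProd _ _
    _ ≤ ∑ i ∈ γ.support, e * γ i := Finset.sum_le_sum fun i _ =>
        (totalDegree_pow _ _).trans (mul_comm e _ ▸ Nat.mul_le_mul_left _ (hg i))
    _ = e * γ.sum fun _ => id := (Finset.mul_sum _ _ _).symm
    _ ≤ e * p.totalDegree := Nat.mul_le_mul_left e (le_totalDegree hγ)

/-- The substitution `x ↦ x + t`, which expands a polynomial at the point `t`. -/
noncomputable def translate [CommSemiring R] (t : σ → R) :
    MvPolynomial σ R →ₐ[R] MvPolynomial σ R :=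
  aeval fun i => X i + C (t i)

lemma totalDegree_translate_le [CommSemiring R] (t : σ → R) (p : MvPolynomial σ R) :
    (translate t p).totalDegree ≤ p.totalDegree := by
  have totalDegree_le (i : σ) : (X i + C (t i)).totalDegree ≤ 1 :=
    (totalDegree_add _ _).trans <| max_le ((totalDegree_monomial_le _ _).trans_eq (by simp))
      ((totalDegree_C _).trans_le zero_le_one)
  exact (totalDegree_aeval_le totalDegree_le p).trans_eq (one_mul _)

lemma constantCoeff_translate [CommSemiring R] (t : σ → R) (p : MvPolynomial σ R) :
    constantCoeff (translate t p) = eval t p := by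
  suffices constantCoeff.comp (translate t).toRingHom = eval t from RingHom.congr_fun this p
  ext i <;> simp [translate]

lemma translate_neg_translate [CommRing R] (t : σ → R) (p : MvPolynomial σ R) :
    translate (-t) (translate t p) = p := by
  suffices (translate (-t)).comp (translate t) = AlgHom.id R _ from AlgHom.congr_fun this p
  ext i
  simp [translate]

end Translation

section MainBound

variable {F σ m n : Type*} [Field F] [Infinite F] [Finite m] [Fintype n]

lemma exists_map_translate_eq_mul (N : Matrix m n (MvPolynomial σ F)) (t : σ → F)
    (ht : ∀ a, (N.map (eval a)).rank ≤ (N.map (eval t)).rank) :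
    ∃ (U : Matrix m (Fin (N.map (eval t)).rank) (MvPowerSeries σ F))
      (V : Matrix (Fin (N.map (eval t)).rank) n (MvPowerSeries σ F)),
      (N.map fun p => (translate t p : MvPowerSeries σ F)) = U * V := by
  cases nonempty_fintype m
  obtain ⟨P, Q, hPQ⟩ := exists_mul_mul_eq_one (N.map (eval t))
  let expand : MvPolynomial σ F →+* MvPowerSeries σ F :=
    coeToMvPowerSeries.ringHom.comp (translate t).toRingHom
  have constantCoeff_expand (p : MvPolynomial σ F) :
      MvPowerSeries.constantCoeff (expand p) = eval t p :=
    constantCoeff_translate t p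
  have eval_det : eval t (P.map (C (σ := σ)) * N * Q.map (C (σ := σ))).det = 1 := by
    have map_C_P : (P.map C).map (eval t) = P := by
      ext
      simp
    have map_C_Q : (Q.map C).map (eval t) = Q := by
      ext
      simp
    rw [RingHom.map_det, RingHom.mapMatrix_apply, Matrix.map_mul, Matrix.map_mul, map_C_P,
      map_C_Q, hPQ, det_one]
  refine exists_map_eq_mul (P := P.map C) (Q := Q.map C) expand ?_ (by simpa using ht)
  rw [MvPowerSeries.isUnit_iff_constantCoeff, constantCoeff_expand, eval_det]
  exact isUnit_one

theorem rank_map_le_of_rank_eval_le [Finite σ] {N : Matrix m n (MvPolynomial σ F)} {d r : ℕ}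
    (hd : ∀ i j, (N i j).totalDegree ≤ d) (hr : ∀ a, (N.map (eval a)).rank ≤ r)
    (φ : MvPolynomial σ F →ₗ[F] F) :
    (N.map φ).rank ≤
      r * ((degreeLT σ (d / 2 + 1)).card + (degreeLT σ ((d + 1) / 2)).card) := by
  let ranks : Set ℕ := Set.range fun a => (N.map (eval a)).rank
  have ranks_bdd : BddAbove ranks := ⟨r, Set.forall_mem_range.2 hr⟩
  obtain ⟨t, ht⟩ : sSup ranks ∈ ranks := Nat.sSup_mem (Set.range_nonempty _) ranks_bdd
  obtain ⟨U, V, hUV⟩ := exists_map_translate_eq_mul N t fun a =>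
    (le_csSup ranks_bdd (Set.mem_range_self a)).trans_eq ht.symm
  let ψ : MvPolynomial σ F →ₗ[F] F := φ ∘ₗ (translate (-t)).toLinearMap
  have h_map : N.map φ =
      (U * V).map fun p => ψ (MvPowerSeries.truncFinset F (degreeLT σ (d + 1)) p) := by
    rw [← hUV]
    ext i j
    have h_trunc := (MvPowerSeries.truncFinset_coe_eq_self_iff _).2 <|
      support_subset_degreeLT_iff.2 ((totalDegree_translate_le t (N i j)).trans (hd i j))
    simp only [map_apply, h_trunc, ψ, LinearMap.comp_apply, AlgHom.toLinearMap_apply,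
      translate_neg_translate]
  calc (N.map φ).rank
      ≤ (N.map (eval t)).rank * (hankel ψ (degreeLT σ (d + 1))).rank := by
        simpa only [h_map, Fintype.card_fin] using
          rank_map_truncFinset_mul_le (isLowerSet_degreeLT (d + 1)) ψ U V
    _ ≤ r * ((degreeLT σ (d / 2 + 1)).card + (degreeLT σ ((d + 1) / 2)).card) :=
        Nat.mul_le_mul (hr t) (rank_hankel_degreeLT_le ψ d)

end MainBound

section Powers

variable {R σ : Type*} [CommSemiring R]

/-- The multinomial coefficient `d! / (γ! (d - |γ|)!)`, by which the coefficient of `x ^ γ` in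
`(1 + ∑ i, a i x i) ^ d` differs from `a ^ γ`. It is zero for `|γ| > d`. -/
noncomputable def affinePowCoeff (d : ℕ) (γ : σ →₀ ℕ) : ℕ := d.choose γ.degree * γ.multinomial

lemma affinePowCoeff_pos {d : ℕ} {γ : σ →₀ ℕ} (hγ : γ.degree ≤ d) : 0 < affinePowCoeff d γ :=
  Nat.mul_pos (Nat.choose_pos hγ) (Nat.multinomial_pos _ _)

lemma affinePowCoeff_eq_zero {d : ℕ} {γ : σ →₀ ℕ} (hγ : d < γ.degree) : affinePowCoeff d γ = 0 := by
  rw [affinePowCoeff, Nat.choose_eq_zero_of_lt hγ, zero_mul]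

lemma coeff_one_add_sum_pow [Fintype σ] (a : σ → R) (d : ℕ) (γ : σ →₀ ℕ) :
    coeff γ ((1 + ∑ i, C (a i) * X i) ^ d) =
      affinePowCoeff d γ * γ.prod fun i e => a i ^ e := by
  have coeff_summand (e : ℕ) :
      coeff γ ((∑ i, C (a i) * X i) ^ e * (d.choose e : MvPolynomial σ R)) =
        if γ.degree = e then affinePowCoeff d γ * γ.prod fun i e => a i ^ e else 0 := by
    simp only [← smul_eq_C_mul]
    rw [mul_comm, ← C_eq_coe_nat, coeff_C_mul, coeff_linearCombination_X_pow_of_fintype]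
    change ((d.choose e : ℕ) : R) * (if γ.degree = e then _ else _) = _
    split_ifs with he
    · subst he
      simp [affinePowCoeff, mul_assoc]
    · rw [mul_zero]
  simp only [add_comm (1 : MvPolynomial σ R), add_pow, one_pow, mul_one, coeff_sum, coeff_summand]
  rw [Finset.sum_ite_eq, ite_eq_left_iff, Finset.mem_range, Nat.lt_succ_iff, not_le]
  intro hd
  rw [affinePowCoeff_eq_zero hd, Nat.cast_zero, zero_mul]

lemma map_eq_sum_coeff_smul {M : Type*} [AddCommMonoid M] [Module R M]
    (L : MvPolynomial σ R →ₗ[R] M) {p : MvPolynomial σ R} {s : Finset (σ →₀ ℕ)}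
    (hp : p.support ⊆ s) : L p = ∑ γ ∈ s, coeff γ p • L (monomial γ 1) := by
  calc L p = ∑ γ ∈ p.support, coeff γ p • L (monomial γ 1) := by
        conv_lhs => rw [p.as_sum, map_sum]
        simp [← map_smul]
    _ = ∑ γ ∈ s, coeff γ p • L (monomial γ 1) := Finset.sum_subset hp fun γ _ hγ => by
        rw [notMem_support_iff.1 hγ, zero_smul]

/-- The matrix `L ((1 + ∑ i, a i x i) ^ d)` as a polynomial in the coefficients `a` of the form;
these are the variables of its entries. -/
noncomputable def genericPowMatrix {m n : Type*} [Finite σ]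
    (L : MvPolynomial σ R →ₗ[R] Matrix m n R) (d : ℕ) : Matrix m n (MvPolynomial σ R) :=
  of fun i j => ∑ γ ∈ degreeLT σ (d + 1), monomial γ (affinePowCoeff d γ * L (monomial γ 1) i j)

variable {m n : Type*}

lemma coeff_genericPowMatrix [Finite σ] (L : MvPolynomial σ R →ₗ[R] Matrix m n R) {d : ℕ}
    {γ : σ →₀ ℕ} (hγ : γ ∈ degreeLT σ (d + 1)) (i : m) (j : n) :
    coeff γ (genericPowMatrix L d i j) = affinePowCoeff d γ * L (monomial γ 1) i j := by
  classical
  simp only [genericPowMatrix, of_apply, coeff_sum, coeff_monomial]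
  rw [Finset.sum_ite_eq', if_pos hγ]

lemma totalDegree_genericPowMatrix_le [Finite σ] (L : MvPolynomial σ R →ₗ[R] Matrix m n R) (d : ℕ)
    (i : m) (j : n) : (genericPowMatrix L d i j).totalDegree ≤ d :=
  totalDegree_finsetSum_le fun _ hγ =>
    (totalDegree_monomial_le _ _).trans (Nat.lt_succ_iff.1 (mem_degreeLT.1 hγ))

lemma map_eval_genericPowMatrix [Fintype σ] (L : MvPolynomial σ R →ₗ[R] Matrix m n R) (d : ℕ)
    (a : σ → R) :
    (genericPowMatrix L d).map (eval a) = L ((1 + ∑ i, C (a i) * X i) ^ d) := by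
  have h_support :
      ((1 + ∑ i, C (a i) * X i : MvPolynomial σ R) ^ d).support ⊆ degreeLT σ (d + 1) := by
    intro γ hγ
    rw [mem_support_iff, coeff_one_add_sum_pow] at hγ
    rw [mem_degreeLT, Nat.lt_succ_iff]
    by_contra! hd
    rw [affinePowCoeff_eq_zero hd, Nat.cast_zero, zero_mul] at hγ
    exact hγ rfl
  rw [map_eq_sum_coeff_smul L h_support]
  ext i j
  simp only [genericPowMatrix, map_apply, of_apply, map_sum, eval_monomial, Matrix.sum_apply,
    Matrix.smul_apply, smul_eq_mul, coeff_one_add_sum_pow]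
  exact Finset.sum_congr rfl fun γ _ => mul_right_comm _ _ _

lemma exists_map_genericPowMatrix_eq {F : Type*} [Field F] [CharZero F] [Finite σ]
    (L : MvPolynomial σ F →ₗ[F] Matrix m n F) {f : MvPolynomial σ F} {d : ℕ}
    (hf : f.totalDegree ≤ d) :
    ∃ φ : MvPolynomial σ F →ₗ[F] F, (genericPowMatrix L d).map φ = L f := by
  refine ⟨∑ γ ∈ degreeLT σ (d + 1), (coeff γ f / affinePowCoeff d γ) • lcoeff F γ, ?_⟩
  rw [map_eq_sum_coeff_smul L (support_subset_degreeLT_iff.2 hf)]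
  ext i j
  simp only [map_apply, LinearMap.sum_apply, LinearMap.smul_apply, lcoeff_apply, smul_eq_mul,
    Matrix.sum_apply, Matrix.smul_apply]
  refine Finset.sum_congr rfl fun γ hγ => ?_
  have hc : (affinePowCoeff d γ : F) ≠ 0 :=
    Nat.cast_ne_zero.2 (affinePowCoeff_pos (Nat.lt_succ_iff.1 (mem_degreeLT.1 hγ))).ne'
  rw [coeff_genericPowMatrix L hγ, ← mul_assoc, div_mul_cancel₀ _ hc]

end Powers

lemma card_degreeLT_add_card_degreeLT_le {σ : Type*} [Fintype σ] (d : ℕ) :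
    (degreeLT σ (d / 2 + 1)).card + (degreeLT σ ((d + 1) / 2)).card ≤
      min 2 (d + 1) * (Fintype.card σ + d / 2).choose (Fintype.card σ) := by
  rw [← card_degreeLT_succ]
  rcases d.eq_zero_or_pos with rfl | hd
  · simp [degreeLT]
  · have := Finset.card_le_card (degreeLT_mono (σ := σ) (show (d + 1) / 2 ≤ d / 2 + 1 by lia))
    rw [min_eq_left (by lia)]
    lia

end WaringRank

open WaringRank in
theorem stmt12_general {F σ m n : Type*} [Field F] [CharZero F] [Fintype σ] [Finite m] [Fintype n]
    {d r : ℕ} (L : MvPolynomial σ F →ₗ[F] Matrix m n F)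
    (hL : ∀ a : σ → F, (L ((1 + ∑ i, C (a i) * X i) ^ d)).rank ≤ r)
    {f : MvPolynomial σ F} (hf : f.totalDegree ≤ d) :
    (L f).rank ≤ r * (min 2 (d + 1) * (Fintype.card σ + d / 2).choose (Fintype.card σ)) := by
  obtain ⟨φ, hφ⟩ := exists_map_genericPowMatrix_eq L hf
  calc (L f).rank = ((genericPowMatrix L d).map φ).rank := by rw [hφ]
    _ ≤ r * ((degreeLT σ (d / 2 + 1)).card + (degreeLT σ ((d + 1) / 2)).card) :=
        rank_map_le_of_rank_eval_le (totalDegree_genericPowMatrix_le L d)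
          (fun a => map_eval_genericPowMatrix L d a ▸ hL a) φ
    _ ≤ r * (min 2 (d + 1) * (Fintype.card σ + d / 2).choose (Fintype.card σ)) :=
        Nat.mul_le_mul_left r (card_degreeLT_add_card_degreeLT_le d)

theorem stmt12 (F : Type*) [Field F] [IsAlgClosed F] [CharZero F] (n m d r : ℕ)
    (L : MvPolynomial (Fin n) F →ₗ[F] Matrix (Fin m) (Fin m) F)
    (hL : ∀ (a0 : F) (a : Fin n → F),
      (L ((MvPolynomial.C a0 + ∑ i, MvPolynomial.C (a i) * MvPolynomial.X i) ^ d)).rank ≤ r)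
    (f : MvPolynomial (Fin n) F) (hf : f.totalDegree ≤ d) :
    (L f).rank ≤ r * (d + 1) * (n + d / 2).choose n := by
  rw [mul_assoc]
  exact (stmt12_general L (fun a => by simpa using hL 1 a) hf).trans <| Nat.mul_le_mul_left r <|
    Nat.mul_le_mul (min_le_right _ _) (by rw [Fintype.card_fin])
end

section
/- Let F be an algebraically closed field of characteristic zero and let L : Ten_{n,d}(F) → Mat_m(F) be a linear map on the space of d-dimensional tensors of side n such that rank(L(u_1 ⊗ ··· ⊗ u_d)) ≤ r for all vectors u_1,...,u_d ∈ F^n. Then for every tensor T ∈ Ten_{n,d}(F), rank(L(T)) ≤ r · 2^d · n^{⌊d/2⌋}. -/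
/-!
Let `s` be the largest size of a nonvanishing minor of `L(u₁ ⊗ ⋯ ⊗ u_d)`, attained at some `u`;
thus `s ≤ r`. Over power series in variables `x_{k,i}`, the matrix
`M(x) = L((u₁ + x₁) ⊗ ⋯ ⊗ (u_d + x_d))` has an `s × s` minor with nonzero constant term, while its
`(s + 1) × (s + 1)` minors vanish identically because `F` is infinite. A Schur complement then
factors `M = A B` through the free module of rank `s`. The coefficient of `∏ₖ x_{k, j k}` in `M` is
`L(e_{j 1} ⊗ ⋯ ⊗ e_{j d})`, and in `A B` it is a sum over `S ⊆ {1, …, d}` of `A_{S,j} B_{Sᶜ,j}`,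
where `A_{S,j}` depends only on `j` restricted to `S` and `B_{Sᶜ,j}` only on `j` restricted to `Sᶜ`.
Summing over `j` and grouping by the smaller of the two restrictions, each `S` contributes rank at
most `s n^{⌊d/2⌋}`.
-/

open Finset Matrix

namespace TensorRankBarrier

section Rank

variable {F α β τ : Type*} [Field F] [Fintype β]

lemma rank_add_le (A B : Matrix α β F) : (A + B).rank ≤ A.rank + B.rank := by
  rw [rank, mulVecLin_add]
  exact (Submodule.finrank_mono (LinearMap.range_add_le _ _)).trans
    (Submodule.finrank_add_le_finrank_add_finrank _ _)

lemma rank_sum_le {J : Type*} (s : Finset J) (A : J → Matrix α β F) :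
    (∑ j ∈ s, A j).rank ≤ ∑ j ∈ s, (A j).rank :=
  le_sum_of_subadditive (fun M : Matrix α β F => M.rank) rank_zero.le rank_add_le s A

lemma rank_sum_le_of_rank_sum_fiber_le {I J : Type*} [Fintype I] [DecidableEq I] [Fintype J]
    {f : J → I} {M : J → Matrix α β F} {c : ℕ}
    (hM : ∀ j₀, (∑ j with f j = f j₀, M j).rank ≤ c) :
    (∑ j, M j).rank ≤ Fintype.card I * c := by
  have rank_fiber_le (i : I) : (∑ j with f j = i, M j).rank ≤ c := by
    by_cases hi : ∃ j₀, f j₀ = i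
    · obtain ⟨j₀, rfl⟩ := hi
      exact hM j₀
    · simp [filter_false_of_mem fun j _ hj => hi ⟨j, hj⟩]
  calc (∑ j, M j).rank
      = (∑ i, ∑ j with f j = i, M j).rank := congrArg rank (sum_fiberwise univ f M).symm
    _ ≤ ∑ i, (∑ j with f j = i, M j).rank := rank_sum_le _ _
    _ ≤ Fintype.card I * c := by
      simpa using sum_le_card_nsmul univ _ _ fun i _ => rank_fiber_le i

lemma rank_sum_mul_le_of_factorsThrough_left [Fintype τ] {I J : Type*} [Fintype I] [Fintype J]
    {f : J → I} {A : J → Matrix α τ F} (hA : A.FactorsThrough f) (B : J → Matrix τ β F) :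
    (∑ j, A j * B j).rank ≤ Fintype.card I * Fintype.card τ := by
  classical
  refine rank_sum_le_of_rank_sum_fiber_le (f := f) fun j₀ => ?_
  have pull_out : ∑ j with f j = f j₀, A j * B j = A j₀ * ∑ j with f j = f j₀, B j := by
    rw [Matrix.mul_sum]
    exact sum_congr rfl fun j hj => by rw [hA (mem_filter.1 hj).2]
  rw [pull_out]
  exact (rank_mul_le_left _ _).trans (rank_le_card_width _)

lemma rank_sum_mul_le_of_factorsThrough_right [Fintype τ] {I J : Type*} [Fintype I] [Fintype J]
    {f : J → I} (A : J → Matrix α τ F) {B : J → Matrix τ β F} (hB : B.FactorsThrough f) :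
    (∑ j, A j * B j).rank ≤ Fintype.card I * Fintype.card τ := by
  classical
  refine rank_sum_le_of_rank_sum_fiber_le (f := f) fun j₀ => ?_
  have pull_out : ∑ j with f j = f j₀, A j * B j = (∑ j with f j = f j₀, A j) * B j₀ := by
    rw [Matrix.sum_mul]
    exact sum_congr rfl fun j hj => by rw [hB (mem_filter.1 hj).2]
  rw [pull_out]
  exact (rank_mul_le_right _ _).trans (rank_le_card_height _)

lemma rank_sum_smul_mul_le_of_dependsOn [Fintype τ] {ι : Type*} [Fintype ι]
    [DecidableEq ι] {κ : ι → Type*} [∀ k, Fintype (κ k)] {S : Finset ι}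
    {A : (∀ k, κ k) → Matrix α τ F} {B : (∀ k, κ k) → Matrix τ β F}
    (hA : DependsOn A S) (hB : DependsOn B (Sᶜ : Finset ι)) (T : (∀ k, κ k) → F) :
    (∑ j, T j • (A j * B j)).rank ≤
      min (∏ k ∈ S, Fintype.card (κ k)) (∏ k ∈ Sᶜ, Fintype.card (κ k)) * Fintype.card τ := by
  have card_restrictions (U : Finset ι) :
      Fintype.card (∀ k : (U : Set ι), κ k) = ∏ k ∈ U, Fintype.card (κ k) := by
    rw [Fintype.card_pi]
    exact prod_coe_sort U fun k => Fintype.card (κ k)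
  rw [min_mul_of_nonneg _ _ (Nat.zero_le _), le_min_iff, ← card_restrictions, ← card_restrictions]
  constructor
  · simp_rw [← Matrix.mul_smul]
    exact rank_sum_mul_le_of_factorsThrough_left (dependsOn_iff_factorsThrough.1 hA) _
  · simp_rw [← Matrix.smul_mul]
    exact rank_sum_mul_le_of_factorsThrough_right _ (dependsOn_iff_factorsThrough.1 hB)

end Rank

section Minors

lemma exists_eq_mul_of_isUnit_det_of_bordered_eq_zero {R α β τ : Type*} [CommRing R] [Fintype τ]
    [DecidableEq τ] (M : Matrix α β R) (p : τ → α) (q : τ → β)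
    (hunit : IsUnit (M.submatrix p q).det)
    (hbordered : ∀ a b, (M.submatrix (Sum.elim p fun _ : Unit => a)
      (Sum.elim q fun _ : Unit => b)).det = 0) :
    ∃ (A : Matrix α τ R) (B : Matrix τ β R), M = A * B := by
  let _ : Invertible (M.submatrix p q) := ((isUnit_iff_isUnit_det _).2 hunit).invertible
  refine ⟨M.submatrix id q * ⅟(M.submatrix p q), M.submatrix p id, ?_⟩
  ext a b
  have hblocks : M.submatrix (Sum.elim p fun _ : Unit => a) (Sum.elim q fun _ : Unit => b) =
      fromBlocks (M.submatrix p q) (M.submatrix p fun _ => b) (M.submatrix (fun _ => a) q)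
        (M.submatrix (fun _ => a) fun _ => b) := by
    ext (_ | _) (_ | _) <;> rfl
  have hschur := hbordered a b
  rw [hblocks, det_fromBlocks₁₁, hunit.mul_right_eq_zero, det_unique, Matrix.sub_apply,
    sub_eq_zero] at hschur
  exact hschur

lemma exists_maximal_nonzero_minor {F α β X : Type*} [Field F] [Fintype β] [Nonempty X]
    (M : X → Matrix α β F) {r : ℕ} (hM : ∀ x, (M x).rank ≤ r) :
    ∃ s ≤ r, (∃ x, ∃ (p : Fin s → α) (q : Fin s → β), ((M x).submatrix p q).det ≠ 0) ∧
      ∀ x (p : Fin s ⊕ Unit → α) (q : Fin s ⊕ Unit → β), ((M x).submatrix p q).det = 0 := by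
  classical
  let HasMinor (s : ℕ) : Prop :=
    ∃ x, ∃ (p : Fin s → α) (q : Fin s → β), ((M x).submatrix p q).det ≠ 0
  have le_of_hasMinor {s : ℕ} : HasMinor s → s ≤ r := by
    rintro ⟨x, p, q, hdet⟩
    calc s = ((M x).submatrix p q).rank := by rw [rank_of_det_ne_zero hdet, Fintype.card_fin]
      _ ≤ (M x).rank := rank_submatrix_le _ p q
      _ ≤ r := hM x
  have hasMinor_zero : HasMinor 0 :=
    ⟨Classical.arbitrary X, Fin.elim0, Fin.elim0, by simp⟩
  let s := Nat.findGreatest HasMinor r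
  refine ⟨s, Nat.findGreatest_le r, Nat.findGreatest_spec (Nat.zero_le r) hasMinor_zero, ?_⟩
  intro x p q
  by_contra hdet
  let e : Fin (s + 1) ≃ Fin s ⊕ Unit := Fintype.equivOfCardEq (by simp)
  have hasMinor_succ : HasMinor (s + 1) := by
    refine ⟨x, p ∘ e, q ∘ e, ?_⟩
    rwa [← submatrix_submatrix, det_submatrix_equiv_self]
  exact Nat.findGreatest_is_greatest (Nat.lt_succ_self s) (le_of_hasMinor hasMinor_succ)
    hasMinor_succ

end Minors

section SquarefreeExponent

variable {ι σ : Type*}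

/-- The exponent of the monomial `∏ k ∈ S, x_{f k}`, which is squarefree when `f` is injective. -/
noncomputable def squarefreeExponent (f : ι → σ) (S : Finset ι) : σ →₀ ℕ :=
  ∑ k ∈ S, Finsupp.single (f k) 1

lemma squarefreeExponent_apply [DecidableEq σ] {f : ι → σ} (hf : f.Injective) (S : Finset ι)
    (x : σ) : squarefreeExponent f S x = if x ∈ S.image f then 1 else 0 := by
  rw [squarefreeExponent, ← sum_image (g := f) (f := fun y => Finsupp.single y 1) hf.injOn,
    Finsupp.finsetSum_apply]
  simp [Finsupp.single_apply]

lemma support_squarefreeExponent [DecidableEq σ] {f : ι → σ} (hf : f.Injective) (S : Finset ι) :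
    (squarefreeExponent f S).support = S.image f := by
  ext x
  simp [squarefreeExponent_apply hf]

lemma squarefreeExponent_injective {f : ι → σ} (hf : f.Injective) :
    (squarefreeExponent f).Injective := by
  classical
  intro S T hST
  rw [← image_injective hf |>.eq_iff, ← support_squarefreeExponent hf, hST,
    support_squarefreeExponent hf]

lemma exists_eq_squarefreeExponent_of_le {f : ι → σ} (hf : f.Injective) {S : Finset ι}
    {e : σ →₀ ℕ} (he : e ≤ squarefreeExponent f S) : ∃ T, e = squarefreeExponent f T := by
  classical
  refine ⟨{k ∈ S | e (f k) ≠ 0}, ?_⟩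
  ext x
  have hx := he x
  rw [squarefreeExponent_apply hf] at hx ⊢
  grind

lemma sum_antidiagonal_squarefreeExponent_univ [Fintype ι] [DecidableEq ι] [DecidableEq σ]
    {M : Type*} [AddCommMonoid M] {f : ι → σ} (hf : f.Injective)
    (g : (σ →₀ ℕ) × (σ →₀ ℕ) → M) :
    ∑ e ∈ HasAntidiagonal.antidiagonal (squarefreeExponent f univ), g e =
      ∑ S, g (squarefreeExponent f S, squarefreeExponent f Sᶜ) := by
  have add_compl (S : Finset ι) :
      squarefreeExponent f S + squarefreeExponent f Sᶜ = squarefreeExponent f univ :=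
    sum_add_sum_compl S _
  symm
  refine sum_bij (fun S _ => (squarefreeExponent f S, squarefreeExponent f Sᶜ))
    (fun S _ => HasAntidiagonal.mem_antidiagonal.2 (add_compl S))
    (fun S _ T _ hST => squarefreeExponent_injective hf (Prod.mk.inj hST).1) ?_ (fun _ _ => rfl)
  rintro ⟨a, b⟩ hab
  rw [HasAntidiagonal.mem_antidiagonal] at hab
  obtain ⟨S, rfl⟩ := exists_eq_squarefreeExponent_of_le hf (le_of_le_of_eq le_self_add hab)
  have hb : squarefreeExponent f Sᶜ = b := add_left_cancel ((add_compl S).trans hab.symm)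
  exact ⟨S, mem_univ S, by rw [hb]⟩

lemma map_coeff_squarefreeExponent_mul [Fintype ι] [DecidableEq ι] {R α β τ : Type*}
    [CommSemiring R] [Fintype τ] {f : ι → σ} (hf : f.Injective)
    (A : Matrix α τ (MvPowerSeries σ R)) (B : Matrix τ β (MvPowerSeries σ R)) :
    (A * B).map (MvPowerSeries.coeff (squarefreeExponent f univ)) =
      ∑ S, A.map (MvPowerSeries.coeff (squarefreeExponent f S)) *
        B.map (MvPowerSeries.coeff (squarefreeExponent f Sᶜ)) := by
  classical
  ext a b
  simp only [map_apply, mul_apply, map_sum, MvPowerSeries.coeff_mul,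
    sum_antidiagonal_squarefreeExponent_univ hf, Matrix.sum_apply]
  exact sum_comm

end SquarefreeExponent

section PureTensorImage

variable {ι : Type*} {κ : ι → Type*} [Fintype ι] [∀ k, Fintype (κ k)] [DecidableEq ι]
variable {F R α β τ : Type*} [CommRing F] [CommRing R] [Algebra F R]

/-- The image of the product tensor `⨂ₖ vₖ` under the linear map sending the basis tensor indexed by
`j` to `N j`, with scalars extended from `F` to `R` so that the vectors `vₖ` may be generic. -/
def pureTensorImage (N : (∀ k, κ k) → Matrix α β F) (v : ∀ k, κ k → R) : Matrix α β R :=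
  ∑ j, (∏ k, v k (j k)) • (N j).map (algebraMap F R)

lemma map_pureTensorImage {R' : Type*} [CommRing R'] [Algebra F R'] (φ : R →ₐ[F] R')
    (N : (∀ k, κ k) → Matrix α β F) (v : ∀ k, κ k → R) :
    (pureTensorImage N v).map φ = pureTensorImage N fun k i => φ (v k i) := by
  ext a b
  simp [pureTensorImage, Matrix.sum_apply]

lemma aeval_det_submatrix_pureTensorImage_X [Fintype τ] [DecidableEq τ]
    (N : (∀ k, κ k) → Matrix α β F) (p : τ → α) (q : τ → β) (v : (Σ k, κ k) → R) :
    MvPolynomial.aeval v ((pureTensorImage N fun k i =>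
      (MvPolynomial.X ⟨k, i⟩ : MvPolynomial (Σ k, κ k) F)).submatrix p q).det =
      ((pureTensorImage N fun k i => v ⟨k, i⟩).submatrix p q).det := by
  rw [AlgHom.map_det, AlgHom.mapMatrix_apply, ← submatrix_map, map_pureTensorImage]
  simp only [MvPolynomial.aeval_X]

lemma det_submatrix_pureTensorImage_eq_zero [IsDomain F] [Infinite F] [Fintype τ] [DecidableEq τ]
    (N : (∀ k, κ k) → Matrix α β F) (p : τ → α) (q : τ → β)
    (hdet : ∀ u : ∀ k, κ k → F, ((pureTensorImage N u).submatrix p q).det = 0)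
    (v : ∀ k, κ k → R) : ((pureTensorImage N v).submatrix p q).det = 0 := by
  have generic_det : ((pureTensorImage N fun k i =>
      (MvPolynomial.X ⟨k, i⟩ : MvPolynomial (Σ k, κ k) F)).submatrix p q).det = 0 := by
    refine MvPolynomial.funext fun x => ?_
    rw [← MvPolynomial.aeval_eq_eval, map_zero]
    exact (aeval_det_submatrix_pureTensorImage_X N p q x).trans (hdet _)
  rw [← aeval_det_submatrix_pureTensorImage_X N p q fun x => v x.1 x.2, generic_det, map_zero]

end PureTensorImage

section GenericPerturbation

variable {ι : Type*} {κ : ι → Type*}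

/-- The exponent of the monomial `∏ k ∈ S, x_{k, j k}` in the entries `x_{k, i}` of generic vectors
`x_k`. -/
noncomputable def tensorExponent (S : Finset ι) (j : ∀ k, κ k) : (Σ k, κ k) →₀ ℕ :=
  squarefreeExponent (fun k => ⟨k, j k⟩) S

lemma sigmaMk_section_injective (j : ∀ k, κ k) :
    (fun k => (⟨k, j k⟩ : Σ k, κ k)).Injective :=
  fun _ _ h => congrArg Sigma.fst h

lemma dependsOn_tensorExponent (S : Finset ι) :
    DependsOn (tensorExponent S : (∀ k, κ k) → (Σ k, κ k) →₀ ℕ) S :=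
  fun _ _ h => sum_congr rfl fun k hk => by simp only [h k hk]

variable [Fintype ι]

lemma tensorExponent_univ_eq_iff {S : Finset ι} {j j' : ∀ k, κ k} :
    tensorExponent univ j = tensorExponent S j' ↔ S = univ ∧ j' = j := by
  classical
  refine ⟨fun h => ?_, by rintro ⟨rfl, rfl⟩; rfl⟩
  have hsupport := congrArg Finsupp.support h
  rw [tensorExponent, tensorExponent, support_squarefreeExponent (sigmaMk_section_injective j),
    support_squarefreeExponent (sigmaMk_section_injective j')] at hsupport
  have hmem (k : ι) : k ∈ S ∧ j' k = j k := by
    have hk : (⟨k, j k⟩ : Σ k, κ k) ∈ S.image fun k => ⟨k, j' k⟩ :=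
      hsupport ▸ mem_image_of_mem _ (mem_univ k)
    obtain ⟨k', hk', heq⟩ := mem_image.1 hk
    obtain ⟨rfl, hj⟩ := Sigma.mk.inj heq
    exact ⟨hk', eq_of_heq hj⟩
  exact ⟨eq_univ_iff_forall.2 fun k => (hmem k).1, funext fun k => (hmem k).2⟩

lemma coeff_tensorExponent_prod_X_add_C {R : Type*} [CommSemiring R]
    [DecidableEq (∀ k, κ k)] (j j' : ∀ k, κ k) (c : ι → R) :
    MvPowerSeries.coeff (tensorExponent univ j)
      (∏ k, (MvPowerSeries.X ⟨k, j' k⟩ + MvPowerSeries.C (c k))) = if j' = j then 1 else 0 := by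
  classical
  have prod_X (S : Finset ι) :
      ∏ k ∈ S, (MvPowerSeries.X ⟨k, j' k⟩ : MvPowerSeries (Σ k, κ k) R) =
        MvPowerSeries.monomial (tensorExponent S j') 1 := by
    simp only [MvPowerSeries.X_def, MvPowerSeries.prod_monomial, prod_const_one]
    rfl
  simp only [Fintype.prod_add, prod_X, ← map_prod, map_sum, MvPowerSeries.coeff_mul_C,
    MvPowerSeries.coeff_monomial, tensorExponent_univ_eq_iff]
  rw [Fintype.sum_eq_single univ fun S hS => by simp [hS]]
  simp

variable [∀ k, Fintype (κ k)] [DecidableEq ι] {F α β : Type*}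

/-- The image of `⨂ₖ (uₖ + xₖ)`, where the entries of the vectors `xₖ` are power series
variables. -/
noncomputable def perturbedImage [CommRing F] (N : (∀ k, κ k) → Matrix α β F)
    (u : ∀ k, κ k → F) : Matrix α β (MvPowerSeries (Σ k, κ k) F) :=
  pureTensorImage N fun k i => MvPowerSeries.X ⟨k, i⟩ + MvPowerSeries.C (u k i)

lemma map_coeff_perturbedImage [CommRing F] (N : (∀ k, κ k) → Matrix α β F) (u : ∀ k, κ k → F)
    (j : ∀ k, κ k) :
    (perturbedImage N u).map (MvPowerSeries.coeff (tensorExponent univ j)) = N j := by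
  classical
  ext a b
  simp [perturbedImage, pureTensorImage, Matrix.sum_apply, MvPowerSeries.algebraMap_apply,
    coeff_tensorExponent_prod_X_add_C]

lemma map_constantCoeff_perturbedImage [CommRing F] (N : (∀ k, κ k) → Matrix α β F)
    (u : ∀ k, κ k → F) :
    (perturbedImage N u).map MvPowerSeries.constantCoeff = pureTensorImage N u := by
  ext a b
  simp [perturbedImage, pureTensorImage, Matrix.sum_apply, MvPowerSeries.algebraMap_apply]

lemma exists_perturbedImage_eq_mul [Field F] [Infinite F] [Fintype β]
    (N : (∀ k, κ k) → Matrix α β F) {r : ℕ}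
    (hN : ∀ u : ∀ k, κ k → F, (pureTensorImage N u).rank ≤ r) :
    ∃ s ≤ r, ∃ u, ∃ (A : Matrix α (Fin s) (MvPowerSeries (Σ k, κ k) F))
      (B : Matrix (Fin s) β (MvPowerSeries (Σ k, κ k) F)), perturbedImage N u = A * B := by
  obtain ⟨s, hsr, ⟨u, p, q, hminor⟩, hbordered⟩ :=
    exists_maximal_nonzero_minor (pureTensorImage (R := F) N) hN
  refine ⟨s, hsr, u, exists_eq_mul_of_isUnit_det_of_bordered_eq_zero _ p q ?_ fun a b =>
    det_submatrix_pureTensorImage_eq_zero N _ _ (fun w => hbordered w _ _) _⟩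
  rw [MvPowerSeries.isUnit_iff_constantCoeff, isUnit_iff_ne_zero, RingHom.map_det,
    RingHom.mapMatrix_apply, ← submatrix_map, map_constantCoeff_perturbedImage]
  exact hminor

lemma exists_eq_sum_mul_dependsOn [Field F] [Infinite F] [Fintype β]
    (N : (∀ k, κ k) → Matrix α β F) {r : ℕ}
    (hN : ∀ u : ∀ k, κ k → F, (pureTensorImage N u).rank ≤ r) :
    ∃ s ≤ r, ∃ (A : Finset ι → (∀ k, κ k) → Matrix α (Fin s) F)
      (B : Finset ι → (∀ k, κ k) → Matrix (Fin s) β F),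
      (∀ S, DependsOn (A S) S) ∧ (∀ S, DependsOn (B S) S) ∧
        ∀ j, N j = ∑ S, A S j * B Sᶜ j := by
  obtain ⟨s, hsr, u, A, B, hAB⟩ := exists_perturbedImage_eq_mul N hN
  refine ⟨s, hsr, fun S j => A.map (MvPowerSeries.coeff (tensorExponent S j)),
    fun S j => B.map (MvPowerSeries.coeff (tensorExponent S j)),
    fun S j j' h => by simp only [dependsOn_tensorExponent S h],
    fun S j j' h => by simp only [dependsOn_tensorExponent S h], fun j => ?_⟩
  rw [← map_coeff_perturbedImage N u j, hAB]
  exact map_coeff_squarefreeExponent_mul (sigmaMk_section_injective j) A B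

lemma rank_sum_smul_le [Field F] [Infinite F] [Fintype β]
    (N : (∀ k, κ k) → Matrix α β F) {r : ℕ}
    (hN : ∀ u : ∀ k, κ k → F, (pureTensorImage N u).rank ≤ r) (T : (∀ k, κ k) → F) :
    (∑ j, T j • N j).rank ≤
      (∑ S, min (∏ k ∈ S, Fintype.card (κ k)) (∏ k ∈ Sᶜ, Fintype.card (κ k))) * r := by
  obtain ⟨s, hsr, A, B, hA, hB, hNAB⟩ := exists_eq_sum_mul_dependsOn N hN
  have regroup : ∑ j, T j • N j = ∑ S, ∑ j, T j • (A S j * B Sᶜ j) := by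
    simp_rw [hNAB, smul_sum]
    exact sum_comm
  rw [regroup, sum_mul]
  refine (rank_sum_le _ _).trans (sum_le_sum fun S _ => ?_)
  refine (rank_sum_smul_mul_le_of_dependsOn (hA S) (hB Sᶜ) T).trans ?_
  rw [Fintype.card_fin]
  gcongr

end GenericPerturbation

theorem rank_map_le_sum_min {ι F α β : Type*} {κ : ι → Type*} [Fintype ι] [DecidableEq ι]
    [∀ k, Fintype (κ k)] [Field F] [Infinite F] [Fintype β]
    (L : ((∀ k, κ k) → F) →ₗ[F] Matrix α β F) {r : ℕ}
    (hL : ∀ u : ∀ k, κ k → F, (L fun j => ∏ k, u k (j k)).rank ≤ r) (T : (∀ k, κ k) → F) :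
    (L T).rank ≤
      (∑ S, min (∏ k ∈ S, Fintype.card (κ k)) (∏ k ∈ Sᶜ, Fintype.card (κ k))) * r := by
  classical
  rw [L.pi_apply_eq_sum_univ]
  refine rank_sum_smul_le _ (fun u => ?_) T
  convert hL u
  rw [L.pi_apply_eq_sum_univ]
  rfl

lemma min_pow_le_pow_half (n a b : ℕ) : min (n ^ a) (n ^ b) ≤ n ^ ((a + b) / 2) := by
  rcases n.eq_zero_or_pos with rfl | hn
  · grind [zero_pow_eq]
  · rw [min_le_iff]
    exact (le_total a b).imp (fun _ => Nat.pow_le_pow_right hn (by lia))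
      (fun _ => Nat.pow_le_pow_right hn (by lia))

end TensorRankBarrier

open TensorRankBarrier

theorem stmt14_general {F ι κ α β : Type*} [Field F] [Infinite F] [Fintype ι] [Fintype κ]
    [Fintype β] (L : ((ι → κ) → F) →ₗ[F] Matrix α β F) (r : ℕ)
    (hL : ∀ u : ι → κ → F, (L fun j => ∏ k, u k (j k)).rank ≤ r) (T : (ι → κ) → F) :
    (L T).rank ≤ r * 2 ^ Fintype.card ι * Fintype.card κ ^ (Fintype.card ι / 2) := by
  classical
  calc (L T).rank
      ≤ (∑ S : Finset ι, min (∏ _k ∈ S, Fintype.card κ) (∏ _k ∈ Sᶜ, Fintype.card κ)) * r :=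
        rank_map_le_sum_min L hL T
    _ ≤ (∑ _S : Finset ι, Fintype.card κ ^ (Fintype.card ι / 2)) * r := by
      gcongr with S
      rw [prod_const, prod_const, ← card_add_card_compl S]
      exact min_pow_le_pow_half _ _ _
    _ = r * 2 ^ Fintype.card ι * Fintype.card κ ^ (Fintype.card ι / 2) := by
      rw [sum_const, card_univ, Fintype.card_finset, smul_eq_mul]
      ring

theorem stmt14 (F : Type*) [Field F] [IsAlgClosed F] [CharZero F] (n m d r : ℕ)
    (L : ((Fin d → Fin n) → F) →ₗ[F] Matrix (Fin m) (Fin m) F)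
    (hL : ∀ u : Fin d → Fin n → F,
      (L (fun j => ∏ k, u k (j k))).rank ≤ r) :
    ∀ T : (Fin d → Fin n) → F, (L T).rank ≤ r * 2 ^ d * n ^ (d / 2) := by
  simpa using stmt14_general L r hL
end
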